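/- arXiv:2001.04739 — 6 statements merged into one kernel-verified Lean document; each statement's English description precedes it below -/
import Mathlib

section
/- Let f, g : ℝⁿ → ℝᵖ be smooth map germs at 0 with f(0) = g(0) = 0. If f and g are bi-Lipschitz contact equivalent, then there exist a germ of a bi-Lipschitz homeomorphism φ : (ℝⁿ, 0) → (ℝⁿ, 0) and a constant c > 1 such that for all x in some neighborhood of 0, (1/c)·‖f(x)‖ ≤ ‖g(φ(x))‖ ≤ c·‖f(x)‖. -/
/-! The germ `φ` is the base map `h` of the contact equivalence. For `x` near `0`, the map
`H (x, y) = (h x, θ x y)` sends `(x, f x)` to `(h x, g (h x))` and `(x, 0)` to `(h x, 0)`. The two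
source points are at distance `‖f x‖` and their images at distance `‖g (h x)‖`, so the bi-Lipschitz
bounds for `H` are exactly the two inequalities; the constant `K ≥ 1` of `H` is enlarged to
`K + 1 > 1`. -/

open Filter Topology

/-- A germ of a bi-Lipschitz homeomorphism `(E, 0) → (E, 0)`: a map which, on an open
neighborhood `U` of `0`, fixes `0`, is bi-Lipschitz (with some constant `K ≥ 1`), and whose
image of `U` is again a neighborhood of `0`. -/
def IsBiLipGermHomeo {E : Type*} [NormedAddCommGroup E] (h : E → E) (U : Set E) : Prop :=
  IsOpen U ∧ (0 : E) ∈ U ∧ h 0 = 0 ∧ h '' U ∈ 𝓝 (0 : E) ∧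
    ∃ K : ℝ, 1 ≤ K ∧ ∀ x ∈ U, ∀ y ∈ U,
      (1 / K) * ‖x - y‖ ≤ ‖h x - h y‖ ∧ ‖h x - h y‖ ≤ K * ‖x - y‖

/-- Bi-Lipschitz contact (𝒦-)equivalence of map germs `f g : (E, 0) → (F, 0)`:
there are germs of bi-Lipschitz homeomorphisms `h : (E,0) → (E,0)` and
`H : (E × F, 0) → (E × F, 0)` of the form `H (x, y) = (h x, θ x y)` such that
`H (x, f x) = (h x, g (h x))` and `θ x 0 = 0` for all `x` near `0`. -/
def BiLipContactEquiv {E F : Type*} [NormedAddCommGroup E] [NormedAddCommGroup F]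
    (f g : E → F) : Prop :=
  ∃ (h : E → E) (θ : E → F → F) (U : Set E) (W : Set (E × F)),
    IsBiLipGermHomeo h U ∧
    IsBiLipGermHomeo (fun q : E × F => (h q.1, θ q.1 q.2)) W ∧
    ∀ᶠ x in 𝓝 (0 : E), θ x (f x) = g (h x) ∧ θ x 0 = 0

/-- Lemma 2.1: if smooth map germs `f g : (ℝⁿ, 0) → (ℝᵖ, 0)` are
bi-Lipschitz contact equivalent, then there exist a germ of a bi-Lipschitz homeomorphism
`φ : (ℝⁿ, 0) → (ℝⁿ, 0)` and a constant `c > 1` such that, near `0`,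
`(1/c) ‖f x‖ ≤ ‖g (φ x)‖ ≤ c ‖f x‖`. -/
theorem rank_biLipschitz_stmt0 {n p : ℕ}
    (f g : EuclideanSpace ℝ (Fin n) → EuclideanSpace ℝ (Fin p))
    (hf : ContDiff ℝ (⊤ : ℕ∞) f) (hg : ContDiff ℝ (⊤ : ℕ∞) g)
    (hf0 : f 0 = 0) (hg0 : g 0 = 0)
    (hK : BiLipContactEquiv f g) :
    ∃ (φ : EuclideanSpace ℝ (Fin n) → EuclideanSpace ℝ (Fin n))
      (U : Set (EuclideanSpace ℝ (Fin n))),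
      IsBiLipGermHomeo φ U ∧
      ∃ c : ℝ, 1 < c ∧
        ∀ᶠ x in 𝓝 (0 : EuclideanSpace ℝ (Fin n)),
          (1 / c) * ‖f x‖ ≤ ‖g (φ x)‖ ∧ ‖g (φ x)‖ ≤ c * ‖f x‖ := by
  obtain ⟨h, θ, U, W, hh, ⟨hWo, hW0, -, -, K, hK1, hbi⟩, hev⟩ := hK
  refine ⟨h, U, hh, K + 1, by linarith, ?_⟩
  have hWn : W ∈ 𝓝 (0 : EuclideanSpace ℝ (Fin n) × EuclideanSpace ℝ (Fin p)) :=
    hWo.mem_nhds hW0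
  have hgraph : ∀ᶠ x in 𝓝 (0 : EuclideanSpace ℝ (Fin n)), (x, f x) ∈ W := by
    have hc : Continuous fun x => (x, f x) := continuous_id.prodMk hf.continuous
    refine hc.continuousAt.eventually_mem ?_
    rw [hf0]
    exact hWn
  have hzero : ∀ᶠ x in 𝓝 (0 : EuclideanSpace ℝ (Fin n)),
      (x, (0 : EuclideanSpace ℝ (Fin p))) ∈ W := by
    have hc : Continuous fun x : EuclideanSpace ℝ (Fin n) =>
        (x, (0 : EuclideanSpace ℝ (Fin p))) := by fun_prop
    exact hc.continuousAt.eventually_mem hWn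
  filter_upwards [hev, hgraph, hzero] with x hx hx1 hx2
  obtain ⟨hlo, hhi⟩ := hbi _ hx1 _ hx2
  -- Both differences have zero first component, so their sup norms are `‖f x‖` and `‖g (h x)‖`.
  simp only [hx.1, hx.2, Prod.mk_sub_mk, sub_self, sub_zero, Prod.norm_mk, norm_zero,
    norm_nonneg, sup_of_le_right] at hlo hhi
  have hfx := norm_nonneg (f x)
  refine ⟨le_trans ?_ hlo, hhi.trans ?_⟩
  · gcongr
    linarith
  · gcongr
    linarith
end

section
/- Let f, g : ℝⁿ → ℝᵖ be smooth map germs at 0 with f(0) = g(0) = 0, each of finite order. If f and g are bi-Lipschitz contact equivalent, then ord(f) = ord(g). -/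
/-!
The order of a smooth germ is determined by its growth: for smooth `f`, the derivatives
`D^j f(0)` with `j < k` all vanish if and only if `‖f x‖ = O(‖x‖ ^ k)`. This growth is preserved by
bi-Lipschitz contact equivalence: since `θ x 0 = 0` and `(h x, 0)`, `(h x, g (h x))` are the images
under `H` of `(x, 0)`, `(x, f x)`, the norms `‖f x‖` and `‖g (h x)‖` are comparable, and `‖h x‖` is
comparable to `‖x‖`.

One direction of the growth criterion (`norm_le_pow_of_iteratedFDeriv_eq_zero`) follows from the
mean value inequality by induction on `k`, passing from `f` to `Df`. The other direction
(`iteratedFDeriv_eq_zero_of_small`) says that if `D^j f(0) = 0` for `j < m` and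
`f = o(‖x‖ ^ m)`, then `D^m f(0) = 0`. It is again an induction passing from `f` to `Df`: by the
first direction `D²f = O(‖x‖ ^ (m - 2))`, and a Landau-type interpolation between `f` and `D²f`,
comparing `f x` with `f (x + w)` for `‖w‖ = s ‖x‖` with `s` small, gives `Df = o(‖x‖ ^ (m - 1))`
(`fderiv_small_of_small`).
-/

open Filter Topology

/-- The order (multiplicity) of a smooth map germ at `0`: the smallest `k` such that the
degree-`k` homogeneous part of the Taylor expansion at `0` (equivalently, the `k`-th
iterated derivative at `0`) is nonzero. -/
noncomputable def germOrder {E F : Type*} [NormedAddCommGroup E] [NormedSpace ℝ E]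
    [NormedAddCommGroup F] [NormedSpace ℝ F] (f : E → F) : ℕ :=
  sInf {k : ℕ | iteratedFDeriv ℝ k f 0 ≠ 0}

section Growth

variable {E : Type} [NormedAddCommGroup E] [NormedSpace ℝ E]

lemma contDiff_fderiv_top {F : Type} [NormedAddCommGroup F] [NormedSpace ℝ F] {f : E → F}
    (hf : ContDiff ℝ (⊤ : ℕ∞) f) : ContDiff ℝ (⊤ : ℕ∞) (fderiv ℝ f) :=
  hf.fderiv_right (by norm_cast)

lemma iteratedFDeriv_fderiv_eq_zero_iff {F : Type} [NormedAddCommGroup F] [NormedSpace ℝ F]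
    {f : E → F} {j : ℕ} {x : E} :
    iteratedFDeriv ℝ j (fderiv ℝ f) x = 0 ↔ iteratedFDeriv ℝ (j + 1) f x = 0 := by
  rw [← norm_eq_zero, norm_iteratedFDeriv_fderiv, norm_eq_zero]

/-- A smooth map whose derivatives of order `< k` vanish at `0` is `O(‖x‖ ^ k)`. The target is
quantified inside so that the induction can pass from `f` to `fderiv ℝ f`. -/
lemma norm_le_pow_of_iteratedFDeriv_eq_zero [ProperSpace E] (k : ℕ) :
    ∀ (F : Type) [NormedAddCommGroup F] [NormedSpace ℝ F] (f : E → F),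
      ContDiff ℝ (⊤ : ℕ∞) f → (∀ j < k, iteratedFDeriv ℝ j f 0 = 0) →
      ∃ C : ℝ, 0 ≤ C ∧ ∀ x : E, ‖x‖ ≤ 1 → ‖f x‖ ≤ C * ‖x‖ ^ k := by
  induction k with
  | zero =>
    intro F _ _ f hf _
    obtain ⟨C, hC⟩ := (isCompact_closedBall (0 : E) 1).exists_bound_of_continuousOn
      hf.continuous.continuousOn
    refine ⟨C, (norm_nonneg _).trans (hC 0 (by simp)), fun x hx => ?_⟩
    simpa using hC x (by simpa using hx)
  | succ k ih =>
    intro F _ _ f hf h0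
    obtain ⟨C, hC0, hC⟩ := ih (E →L[ℝ] F) (fderiv ℝ f) (contDiff_fderiv_top hf)
      (fun j hj => iteratedFDeriv_fderiv_eq_zero_iff.2 (h0 (j + 1) (by omega)))
    refine ⟨C, hC0, fun x hx => ?_⟩
    have hf0 : f 0 = 0 := by
      have := h0 0 (by omega)
      rw [← norm_eq_zero, norm_iteratedFDeriv_zero, norm_eq_zero] at this
      exact this
    have hd : Differentiable ℝ f := hf.differentiable (by simp)
    have key := (convex_closedBall (0 : E) ‖x‖).norm_image_sub_le_of_norm_fderiv_le
      (f := f) (𝕜 := ℝ) (C := C * ‖x‖ ^ k) (x := 0) (y := x)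
      (fun z _ => hd z) (fun z hz => by
        have hz' : ‖z‖ ≤ ‖x‖ := by simpa using hz
        exact (hC z (hz'.trans hx)).trans (by gcongr))
      (by simp) (by simp)
    rw [hf0, sub_zero, sub_zero] at key
    rw [pow_succ, ← mul_assoc]
    exact key

/-- Interpolation: if `f = o(‖x‖ ^ (k + 2))` and `D²f = O(‖x‖ ^ k)`, then
`Df = o(‖x‖ ^ (k + 1))`. -/
lemma fderiv_small_of_small {F : Type} [NormedAddCommGroup F] [NormedSpace ℝ F] {f : E → F}
    (hf : ContDiff ℝ (⊤ : ℕ∞) f) (k : ℕ) (hd0 : fderiv ℝ f 0 = 0) {C : ℝ} (hC0 : 0 ≤ C)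
    (hC : ∀ x : E, ‖x‖ ≤ 1 → ‖fderiv ℝ (fderiv ℝ f) x‖ ≤ C * ‖x‖ ^ k)
    (hs : ∀ ε > 0, ∃ δ > 0, ∀ x : E, ‖x‖ ≤ δ → ‖f x‖ ≤ ε * ‖x‖ ^ (k + 2)) :
    ∀ ε > 0, ∃ δ > 0, ∀ x : E, ‖x‖ ≤ δ → ‖fderiv ℝ f x‖ ≤ ε * ‖x‖ ^ (k + 1) := by
  intro ε hε
  have hd : Differentiable ℝ f := hf.differentiable (by simp)
  have hdd : Differentiable ℝ (fderiv ℝ f) := (contDiff_fderiv_top hf).differentiable (by simp)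
  -- The step `w` has length `s * ‖x‖`, where `s` makes the second order term at most `ε / 2`.
  obtain ⟨s, hs0, hs1, hsC⟩ : ∃ s : ℝ, 0 < s ∧ s ≤ 1 ∧ C * 2 ^ k * s ≤ ε / 2 := by
    have hA : 0 ≤ C * 2 ^ k := by positivity
    refine ⟨min 1 (ε / (2 * (C * 2 ^ k + 1))), by positivity, min_le_left _ _, ?_⟩
    calc C * 2 ^ k * min 1 (ε / (2 * (C * 2 ^ k + 1)))
        ≤ (C * 2 ^ k + 1) * (ε / (2 * (C * 2 ^ k + 1))) := by
          gcongr
          · linarith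
          · exact min_le_right _ _
      _ = ε / 2 := by field_simp
  obtain ⟨δ, hδ, hfδ⟩ := hs (ε * s / (2 * (2 ^ (k + 2) + 1))) (by positivity)
  refine ⟨min (1 / 2) (δ / 2), by positivity, fun x hx => ?_⟩
  have hx1 : ‖x‖ ≤ 1 / 2 := hx.trans (min_le_left _ _)
  have hx2 : ‖x‖ ≤ δ / 2 := hx.trans (min_le_right _ _)
  rcases eq_or_ne x 0 with rfl | hx0
  · simp [hd0]
  set r := ‖x‖ with hr
  have hr0 : 0 < r := norm_pos_iff.2 hx0
  refine ContinuousLinearMap.opNorm_le_of_unit_norm (by positivity) fun v hv => ?_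
  have hball : ∀ z ∈ Metric.closedBall x (s * r), ‖z‖ ≤ 2 * r := by
    intro z hz
    have h1 : ‖z - x‖ ≤ s * r := by simpa [dist_eq_norm] using hz
    have h2 : ‖z‖ ≤ ‖z - x‖ + ‖x‖ := by simpa using norm_add_le (z - x) x
    nlinarith
  have hxmem : x ∈ Metric.closedBall x (s * r) := by
    simpa using (by positivity : 0 ≤ s * r)
  have hDf : ∀ z ∈ Metric.closedBall x (s * r),
      ‖fderiv ℝ f z - fderiv ℝ f x‖ ≤ C * (2 * r) ^ k * (s * r) := by
    intro z hz
    have h1 : ‖z - x‖ ≤ s * r := by simpa [dist_eq_norm] using hz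
    refine ((convex_closedBall x (s * r)).norm_image_sub_le_of_norm_fderiv_le
      (f := fderiv ℝ f) (𝕜 := ℝ) (C := C * (2 * r) ^ k) (fun z _ => hdd z)
      (fun y hy => ?_) hxmem hz).trans (by gcongr)
    have := hball y hy
    exact (hC y (by linarith)).trans (by gcongr)
  have hwn : ‖(s * r) • v‖ = s * r := by
    rw [norm_smul, hv, mul_one, Real.norm_of_nonneg (by positivity)]
  have hymem : x + (s * r) • v ∈ Metric.closedBall x (s * r) := by
    simp only [Metric.mem_closedBall, dist_eq_norm, add_sub_cancel_left, hwn, le_refl]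
  have key := (convex_closedBall x (s * r)).norm_image_sub_le_of_norm_fderiv_le'
    (f := f) (𝕜 := ℝ) (φ := fderiv ℝ f x) (fun z _ => hd z) hDf hxmem hymem
  rw [add_sub_cancel_left, hwn, map_smul] at key
  have hy := hball _ hymem
  set η := ε * s / (2 * (2 ^ (k + 2) + 1)) with hη
  have hη0 : 0 < η := by positivity
  have hfy : ‖f (x + (s * r) • v)‖ ≤ η * (2 * r) ^ (k + 2) :=
    (hfδ _ (by linarith)).trans (by gcongr)
  have hfx : ‖f x‖ ≤ η * r ^ (k + 2) := hfδ _ (by linarith)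
  have tri : ‖(s * r) • fderiv ℝ f x v‖ ≤ ‖f (x + (s * r) • v) - f x - (s * r) • fderiv ℝ f x v‖
      + (‖f (x + (s * r) • v)‖ + ‖f x‖) := by
    have h1 := norm_sub_le (f (x + (s * r) • v) - f x)
      (f (x + (s * r) • v) - f x - (s * r) • fderiv ℝ f x v)
    have h2 := norm_sub_le (f (x + (s * r) • v)) (f x)
    rw [sub_sub_cancel] at h1
    linarith
  rw [norm_smul, Real.norm_of_nonneg (by positivity : 0 ≤ s * r)] at tri
  have hsr : 0 < s * r := by positivity
  refine le_of_mul_le_mul_left ?_ hsr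
  calc s * r * ‖fderiv ℝ f x v‖
      ≤ C * (2 * r) ^ k * (s * r) * (s * r) + (η * (2 * r) ^ (k + 2) + η * r ^ (k + 2)) := by
        linarith
    _ = (C * 2 ^ k * s) * (s * r ^ (k + 2)) + η * (2 ^ (k + 2) + 1) * r ^ (k + 2) := by
        rw [mul_pow, mul_pow]; ring
    _ ≤ ε / 2 * (s * r ^ (k + 2)) + η * (2 ^ (k + 2) + 1) * r ^ (k + 2) := by gcongr
    _ = s * r * (ε * r ^ (k + 1)) := by
        rw [hη]; field_simp; ring

/-- If the derivatives of order `< m` vanish at `0` and `f = o(‖x‖ ^ m)`, then the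
derivative of order `m` vanishes at `0` as well. -/
lemma iteratedFDeriv_eq_zero_of_small [ProperSpace E] (m : ℕ) :
    ∀ (F : Type) [NormedAddCommGroup F] [NormedSpace ℝ F] (f : E → F),
      ContDiff ℝ (⊤ : ℕ∞) f → (∀ j < m, iteratedFDeriv ℝ j f 0 = 0) →
      (∀ ε > 0, ∃ δ > 0, ∀ x : E, ‖x‖ ≤ δ → ‖f x‖ ≤ ε * ‖x‖ ^ m) →
      iteratedFDeriv ℝ m f 0 = 0 := by
  induction m with
  | zero =>
    intro F _ _ f hf _ hs
    rw [← norm_eq_zero, norm_iteratedFDeriv_zero]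
    refine le_antisymm (le_of_forall_pos_le_add fun ε hε => ?_) (norm_nonneg _)
    obtain ⟨δ, hδ, h⟩ := hs ε hε
    simpa using h 0 (by simpa using hδ.le)
  | succ m ih =>
    intro F _ _ f hf h0 hs
    rcases m with _ | k
    · rw [← iteratedFDeriv_fderiv_eq_zero_iff, ← norm_eq_zero, norm_iteratedFDeriv_zero,
        norm_eq_zero]
      have hf0 : f 0 = 0 := by
        have := h0 0 (by omega)
        rw [← norm_eq_zero, norm_iteratedFDeriv_zero, norm_eq_zero] at this
        exact this
      refine HasFDerivAt.fderiv ?_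
      rw [hasFDerivAt_iff_isLittleO_nhds_zero, Asymptotics.isLittleO_iff]
      intro ε hε
      obtain ⟨δ, hδ, h⟩ := hs ε hε
      filter_upwards [Metric.closedBall_mem_nhds (0 : E) hδ] with x hx
      simpa [hf0] using h x (by simpa using hx)
    · have hdf := contDiff_fderiv_top hf
      obtain ⟨C, hC0, hC⟩ := norm_le_pow_of_iteratedFDeriv_eq_zero k _ (fderiv ℝ (fderiv ℝ f))
        (contDiff_fderiv_top hdf) (fun j hj => by
          rw [iteratedFDeriv_fderiv_eq_zero_iff, iteratedFDeriv_fderiv_eq_zero_iff]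
          exact h0 _ (by omega))
      have hd0 : fderiv ℝ f 0 = 0 := by
        have := iteratedFDeriv_fderiv_eq_zero_iff.2 (h0 (0 + 1) (by omega))
        rw [← norm_eq_zero, norm_iteratedFDeriv_zero, norm_eq_zero] at this
        exact this
      rw [← iteratedFDeriv_fderiv_eq_zero_iff]
      exact ih _ (fderiv ℝ f) hdf
        (fun j hj => iteratedFDeriv_fderiv_eq_zero_iff.2 (h0 _ (by omega)))
        (fderiv_small_of_small hf k hd0 hC0 hC hs)

/-- A smooth map which is `O(‖x‖ ^ k)` near `0` has vanishing derivatives of order `< k`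
at `0`. -/
lemma iteratedFDeriv_eq_zero_of_norm_le_pow [ProperSpace E] {F : Type} [NormedAddCommGroup F]
    [NormedSpace ℝ F] {f : E → F} (hf : ContDiff ℝ (⊤ : ℕ∞) f) {k : ℕ} {C r : ℝ} (hr : 0 < r)
    (hC : ∀ x : E, ‖x‖ ≤ r → ‖f x‖ ≤ C * ‖x‖ ^ k) :
    ∀ j < k, iteratedFDeriv ℝ j f 0 = 0 := by
  intro j
  induction j using Nat.strong_induction_on with
  | _ j ih =>
    intro hj
    refine iteratedFDeriv_eq_zero_of_small j F f hf (fun i hi => ih i hi (hi.trans hj)) ?_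
    intro ε hε
    obtain ⟨d, rfl⟩ : ∃ d, k = j + 1 + d := ⟨k - (j + 1), by omega⟩
    refine ⟨min (min r 1) (ε / (|C| + 1)), by positivity, fun x hx => ?_⟩
    have hxr : ‖x‖ ≤ r := hx.trans ((min_le_left _ _).trans (min_le_left _ _))
    have hx1 : ‖x‖ ≤ 1 := hx.trans ((min_le_left _ _).trans (min_le_right _ _))
    have hxe : ‖x‖ ≤ ε / (|C| + 1) := hx.trans (min_le_right _ _)
    calc ‖f x‖ ≤ C * ‖x‖ ^ (j + 1 + d) := hC x hxr
      _ ≤ (|C| + 1) * ‖x‖ ^ (j + 1) := by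
          refine mul_le_mul (by linarith [le_abs_self C]) ?_ (by positivity) (by positivity)
          exact pow_le_pow_of_le_one (norm_nonneg _) hx1 (by omega)
      _ = (|C| + 1) * ‖x‖ * ‖x‖ ^ j := by ring
      _ ≤ (|C| + 1) * (ε / (|C| + 1)) * ‖x‖ ^ j := by gcongr
      _ = ε * ‖x‖ ^ j := by field_simp

/-- If near `0` every value `f x` is dominated by some value `g y` with `‖y‖ = O(‖x‖)`, then the
order of `f` is at least that of `g`. -/
lemma germOrder_le_of_dominated [ProperSpace E] {F : Type} [NormedAddCommGroup F]
    [NormedSpace ℝ F] {f g : E → F} (hf : ContDiff ℝ (⊤ : ℕ∞) f) (hg : ContDiff ℝ (⊤ : ℕ∞) g)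
    (hford : {k : ℕ | iteratedFDeriv ℝ k f 0 ≠ 0}.Nonempty) {A B : ℝ} (hA : 0 < A) (hB : 0 < B)
    (hdom : ∀ᶠ x in 𝓝 (0 : E), ∃ y, ‖y‖ ≤ A * ‖x‖ ∧ ‖f x‖ ≤ B * ‖g y‖) :
    germOrder g ≤ germOrder f := by
  by_contra! hlt
  obtain ⟨C, hC0, hC⟩ := norm_le_pow_of_iteratedFDeriv_eq_zero (germOrder g) F g hg
    (fun j hj => not_not.1 (Nat.notMem_of_lt_sInf hj))
  obtain ⟨r, hr, hball⟩ := Metric.eventually_nhds_iff_ball.1 hdom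
  refine Nat.sInf_mem hford ?_
  refine iteratedFDeriv_eq_zero_of_norm_le_pow hf (k := germOrder g)
    (C := B * (C * A ^ germOrder g)) (r := min (r / 2) (1 / A)) (by positivity) (fun x hx => ?_) _ hlt
  have hx1 : ‖x‖ ≤ r / 2 := hx.trans (min_le_left _ _)
  have hx2 : ‖x‖ ≤ 1 / A := hx.trans (min_le_right _ _)
  obtain ⟨y, hy, hfy⟩ := hball x (by simp only [mem_ball_zero_iff]; linarith)
  have hy1 : ‖y‖ ≤ 1 := hy.trans (by
    calc A * ‖x‖ ≤ A * (1 / A) := by gcongr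
      _ = 1 := by field_simp)
  calc ‖f x‖ ≤ B * ‖g y‖ := hfy
    _ ≤ B * (C * ‖y‖ ^ germOrder g) := by gcongr; exact hC y hy1
    _ ≤ B * (C * (A * ‖x‖) ^ germOrder g) := by gcongr
    _ = B * (C * A ^ germOrder g) * ‖x‖ ^ germOrder g := by rw [mul_pow]; ring

end Growth

/-- Contact equivalence makes `‖f x‖` and `‖g (h x)‖` comparable near `0`. -/
lemma contact_norm_comparable {E F : Type} [NormedAddCommGroup E] [NormedAddCommGroup F]
    {f g : E → F} (hf : ContinuousAt f 0) (hf0 : f 0 = 0) {h : E → E} {θ : E → F → F}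
    {W : Set (E × F)} (hW : IsBiLipGermHomeo (fun q : E × F => (h q.1, θ q.1 q.2)) W)
    (hθ : ∀ᶠ x in 𝓝 (0 : E), θ x (f x) = g (h x) ∧ θ x 0 = 0) :
    ∃ K : ℝ, 1 ≤ K ∧ ∀ᶠ x in 𝓝 (0 : E), ‖f x‖ ≤ K * ‖g (h x)‖ ∧ ‖g (h x)‖ ≤ K * ‖f x‖ := by
  obtain ⟨hWo, hW0, -, -, K, hK1, hK⟩ := hW
  have hWn : W ∈ 𝓝 ((0 : E), (0 : F)) := hWo.mem_nhds hW0
  refine ⟨K, hK1, ?_⟩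
  have e1 : ∀ᶠ x in 𝓝 (0 : E), (x, f x) ∈ W := by
    have : ContinuousAt (fun x => (x, f x)) (0 : E) := continuousAt_id.prodMk hf
    exact this.eventually (by simp only [hf0]; exact hWn)
  have e2 : ∀ᶠ x in 𝓝 (0 : E), (x, (0 : F)) ∈ W := by
    have : ContinuousAt (fun x : E => (x, (0 : F))) 0 := continuousAt_id.prodMk continuousAt_const
    exact this.eventually hWn
  filter_upwards [e1, e2, hθ] with x h1 h2 h3
  have := hK _ h1 _ h2
  simp only [Prod.mk_sub_mk, sub_self, h3.1, h3.2, sub_zero, Prod.norm_mk, norm_zero,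
    norm_nonneg, sup_of_le_right] at this
  refine ⟨?_, this.2⟩
  have h4 := this.1
  rw [one_div, inv_mul_le_iff₀ (by linarith)] at h4
  exact h4

/-- Lemma 2.2: bi-Lipschitz contact equivalent smooth map germs
`(ℝⁿ, 0) → (ℝᵖ, 0)` of finite order have the same order. -/
theorem rank_biLipschitz_stmt2 {n p : ℕ}
    (f g : EuclideanSpace ℝ (Fin n) → EuclideanSpace ℝ (Fin p))
    (hf : ContDiff ℝ (⊤ : ℕ∞) f) (hg : ContDiff ℝ (⊤ : ℕ∞) g)
    (hf0 : f 0 = 0) (hg0 : g 0 = 0)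
    (hford : {k : ℕ | iteratedFDeriv ℝ k f 0 ≠ 0}.Nonempty)
    (hgord : {k : ℕ | iteratedFDeriv ℝ k g 0 ≠ 0}.Nonempty)
    (hK : BiLipContactEquiv f g) :
    germOrder f = germOrder g := by
  obtain ⟨h, θ, U, W, ⟨hUo, hU0, hh0, hUim, L, hL1, hL⟩, hW, hθ⟩ := hK
  obtain ⟨K, hK1, hcmp⟩ := contact_norm_comparable hf.continuous.continuousAt hf0 hW hθ
  have hL0 : 0 < L := by linarith
  have hK0 : 0 < K := by linarith
  have hUn : U ∈ 𝓝 (0 : EuclideanSpace ℝ (Fin n)) := hUo.mem_nhds hU0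
  apply le_antisymm
  · refine germOrder_le_of_dominated hg hf hgord hL0 hK0 ?_
    -- A point `y` near `0` is `h x` with `‖x‖ ≤ L * ‖y‖`, so `x` also lies in the small ball
    -- where the norms of `f x` and `g (h x)` are comparable.
    obtain ⟨r, hr, hball⟩ := Metric.eventually_nhds_iff_ball.1 hcmp
    filter_upwards [hUim, Metric.ball_mem_nhds 0 (by positivity : 0 < r / L)] with y hyU hyr
    obtain ⟨x, hxU, rfl⟩ := hyU
    have hx : ‖x‖ ≤ L * ‖h x‖ := by
      have h1 := (hL x hxU 0 hU0).1
      rw [hh0, sub_zero, sub_zero, one_div, inv_mul_le_iff₀ hL0] at h1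
      exact h1
    refine ⟨x, hx, (hball x ?_).2⟩
    rw [mem_ball_zero_iff] at hyr ⊢
    rw [lt_div_iff₀ hL0] at hyr
    linarith
  · refine germOrder_le_of_dominated hf hg hford hL0 hK0 ?_
    filter_upwards [hcmp, hUn] with x hx hxU
    refine ⟨h x, ?_, hx.1⟩
    have h1 := (hL x hxU 0 hU0).2
    rwa [hh0, sub_zero, sub_zero] at h1
end

section
/- Let f, g : ℝⁿ → ℝᵖ be smooth map germs at 0 with f(0) = g(0) = 0, each of finite order. If f and g are bi-Lipschitz left-right equivalent, then their first homogeneous parts H_f and H_g are bi-Lipschitz left-right equivalent. -/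
/-!
The idea is to blow up the identity `f ∘ φ = ψ ∘ g` at the origin. The rescaled maps
`x ↦ t • φ (x / t)` are uniformly bi-Lipschitz, so as `t → ∞` they converge pointwise along an
ultrafilter to a global bi-Lipschitz homeomorphism `Φ` (`exists_blowUp`), and the convergence
tolerates moving base points. By Taylor's formula, `t ^ m • f (x / t)` converges to the first
homogeneous part `H_f x` when `m = ord f` (`tendsto_rescale`).

The two orders agree: `‖f (φ x)‖ = ‖ψ (g x)‖` is comparable to `‖g x‖`, and rescaling with the
smaller of the orders would make one of `H_f ∘ Φ`, `H_g` vanish identically. This is impossible,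
because the first homogeneous part of a germ of finite order is nonzero as a function
(`exists_firstHomogeneousPart_ne`) and `Φ` is surjective.

With `m = ord f = ord g`, the identity
`t ^ m • f (φ (x / t)) = t ^ m • ψ (t ^ (-m) • (t ^ m • g (x / t)))` passes to the limit and gives
`H_f ∘ Φ = Ψ ∘ H_g`, where `Ψ` is the blow-up of `ψ` along the scales `t ^ m`. These tend to
infinity because `f 0 = 0` forces `m ≥ 1`.
-/

open Filter Topology

/-- Bi-Lipschitz left-right (𝒜-)equivalence of map germs `f g : (E, 0) → (F, 0)`:
there are germs of bi-Lipschitz homeomorphisms `φ : (E, 0) → (E, 0)` and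
`ψ : (F, 0) → (F, 0)` such that `f ∘ φ = ψ ∘ g` near `0`. -/
def BiLipAEquiv {E F : Type*} [NormedAddCommGroup E] [NormedAddCommGroup F]
    (f g : E → F) : Prop :=
  ∃ (φ : E → E) (U : Set E) (ψ : F → F) (V : Set F),
    IsBiLipGermHomeo φ U ∧ IsBiLipGermHomeo ψ V ∧
    ∀ᶠ x in 𝓝 (0 : E), f (φ x) = ψ (g x)

/-- The first homogeneous part of a smooth map germ `f` at `0`: the homogeneous part of
degree `ord f` in the Taylor expansion of `f` at `0`, i.e.
`x ↦ (1 / (ord f)!) • D^{ord f} f(0) (x, …, x)`. -/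
noncomputable def firstHomogeneousPart {E F : Type*} [NormedAddCommGroup E] [NormedSpace ℝ E]
    [NormedAddCommGroup F] [NormedSpace ℝ F] (f : E → F) : E → F :=
  fun x => (((germOrder f).factorial : ℝ)⁻¹) • iteratedFDeriv ℝ (germOrder f) f 0 (fun _ => x)

/-! ### Rescaled Taylor expansions -/

section Taylor

variable {E : Type} [NormedAddCommGroup E] [NormedSpace ℝ E]

theorem germOrder_low {F : Type} [NormedAddCommGroup F] [NormedSpace ℝ F] (f : E → F) :
    ∀ k < germOrder f, iteratedFDeriv ℝ k f 0 = 0 := fun k hk => by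
  have := Nat.notMem_of_lt_sInf hk
  simpa using this

theorem germOrder_ne_zero {F : Type} [NormedAddCommGroup F] [NormedSpace ℝ F]
    {f : E → F} (hf0 : f 0 = 0)
    (hord : {k : ℕ | iteratedFDeriv ℝ k f 0 ≠ 0}.Nonempty) : germOrder f ≠ 0 := by
  intro h
  have h1 : iteratedFDeriv ℝ (germOrder f) f 0 ≠ 0 := Nat.sInf_mem hord
  rw [h] at h1
  exact h1 (by ext v; simpa using hf0)

variable [FiniteDimensional ℝ E]

theorem taylor_bound {F : Type} [NormedAddCommGroup F] [NormedSpace ℝ F] [CompleteSpace F]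
    {f : E → F} (hf : ContDiff ℝ (⊤ : ℕ∞) f) {m : ℕ}
    (h : ∀ k < m, iteratedFDeriv ℝ k f 0 = 0) :
    ∃ C : ℝ, 0 ≤ C ∧ ∀ y : E, ‖y‖ ≤ 1 →
      ‖f y - ((m.factorial : ℝ)⁻¹) • iteratedFDeriv ℝ m f 0 (fun _ => y)‖ ≤ C * ‖y‖ ^ (m + 1) := by
  have hcont : Continuous (iteratedFDeriv ℝ (m + 1) f) :=
    hf.continuous_iteratedFDeriv (by exact_mod_cast le_top)
  obtain ⟨M, hM⟩ := (isCompact_closedBall (0 : E) 1).exists_bound_of_continuousOn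
    hcont.continuousOn
  have hM0 : 0 ≤ M := (norm_nonneg _).trans (hM 0 (by simp))
  refine ⟨(m.factorial : ℝ)⁻¹ * M, by positivity, fun y hy => ?_⟩
  have hT := map_add_eq_sum_add_integral_iteratedFDeriv (f := f) (x := 0) (y := y) (n := m)
    (fun t _ => (hf.of_le (by exact_mod_cast le_top)).contDiffAt)
  rw [Finset.sum_range_succ, Finset.sum_eq_zero, zero_add, zero_add] at hT
  · rw [hT, add_sub_cancel_left, norm_smul, Real.norm_of_nonneg (by positivity), mul_assoc]
    gcongr
    have := intervalIntegral.norm_integral_le_of_norm_le_const (a := (0 : ℝ)) (b := 1)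
      (C := M * ‖y‖ ^ (m + 1))
      (f := fun t : ℝ => (1 - t) ^ m • iteratedFDeriv ℝ (m + 1) f (0 + t • y) (fun _ => y)) ?_
    · simpa using this
    · intro t ht
      rw [Set.uIoc_of_le zero_le_one] at ht
      have h1 : ‖(1 - t) ^ m‖ ≤ 1 := by
        rw [norm_pow, Real.norm_of_nonneg (by linarith [ht.2])]
        exact pow_le_one₀ (by linarith [ht.2]) (by linarith [ht.1])
      have h2 : ‖iteratedFDeriv ℝ (m + 1) f (0 + t • y)‖ ≤ M := by
        refine hM _ ?_
        rw [zero_add, mem_closedBall_zero_iff, norm_smul, Real.norm_of_nonneg ht.1.le]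
        exact mul_le_one₀ ht.2 (norm_nonneg _) hy
      have h3 := (iteratedFDeriv ℝ (m + 1) f (0 + t • y)).le_opNorm (fun _ => y)
      rw [Finset.prod_const, Finset.card_univ, Fintype.card_fin] at h3
      rw [norm_smul]
      calc _ ≤ 1 * (M * ‖y‖ ^ (m + 1)) := by
            gcongr
            exact h3.trans (by gcongr)
        _ = _ := one_mul _
  · intro k hk
    rw [h k (Finset.mem_range.1 hk)]
    simp

/-- `taylor_bound` after zooming in by the factor `t`: the rescaled germ `y ↦ t ^ m • f (y / t)`
is within `O(1 / t)` of its degree-`m` Taylor part, locally uniformly in `y`. -/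
theorem rescale_bound {F : Type} [NormedAddCommGroup F] [NormedSpace ℝ F] [CompleteSpace F]
    {f : E → F} (hf : ContDiff ℝ (⊤ : ℕ∞) f) {m : ℕ}
    (h : ∀ k < m, iteratedFDeriv ℝ k f 0 = 0) :
    ∃ C : ℝ, 0 ≤ C ∧ ∀ (t : ℝ) (y : E), 0 < t → ‖y‖ ≤ t →
      ‖t ^ m • f (t⁻¹ • y) - ((m.factorial : ℝ)⁻¹) • iteratedFDeriv ℝ m f 0 (fun _ => y)‖
        ≤ C * ‖y‖ ^ (m + 1) * t⁻¹ := by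
  obtain ⟨C, hC0, hC⟩ := taylor_bound hf h
  refine ⟨C, hC0, fun t y ht hy => ?_⟩
  have hn : ‖t⁻¹ • y‖ = t⁻¹ * ‖y‖ := by
    rw [norm_smul, norm_inv, Real.norm_of_nonneg ht.le]
  have h1 := hC (t⁻¹ • y) (by rw [hn, inv_mul_le_iff₀ ht]; simpa using hy)
  have h2 : iteratedFDeriv ℝ m f 0 (fun _ => y)
      = t ^ m • iteratedFDeriv ℝ m f 0 (fun _ => t⁻¹ • y) := by
    rw [ContinuousMultilinearMap.map_smul_univ _ (fun _ => t⁻¹) (fun _ => y)]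
    simp [smul_smul, ht.ne']
  rw [h2, smul_comm, ← smul_sub, norm_smul, norm_pow, Real.norm_of_nonneg ht.le]
  calc _ ≤ t ^ m * (C * ‖t⁻¹ • y‖ ^ (m + 1)) := by gcongr
    _ = _ := by rw [hn, mul_pow, inv_pow]; field_simp; ring

/-- If the Taylor part of degree `m` of a smooth map is its first possibly nonzero one and
vanishes as a function, then the full `m`-th derivative at `0` vanishes. This replaces polarization
of the symmetric form `D^m f(0)`. The induction passes to `fderiv ℝ f`: the rescaled maps
`y ↦ t ^ (m + 1) • f (y / t)` tend to `0`, while their derivatives converge locally uniformly to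
the degree-`m` Taylor part of `fderiv ℝ f`, which must therefore vanish. -/
theorem iteratedFDeriv_eq_zero_of_diag (m : ℕ) :
    ∀ {F : Type} [NormedAddCommGroup F] [NormedSpace ℝ F] [CompleteSpace F]
      {f : E → F}, ContDiff ℝ (⊤ : ℕ∞) f → (∀ k < m, iteratedFDeriv ℝ k f 0 = 0) →
      (∀ x : E, iteratedFDeriv ℝ m f 0 (fun _ => x) = 0) → iteratedFDeriv ℝ m f 0 = 0 := by
  induction m with
  | zero =>
    intro F _ _ _ f _ _ h
    ext v
    rw [Subsingleton.elim v (fun _ => 0)]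
    simpa using h 0
  | succ m ih =>
    intro F _ _ _ f hf hlow hdiag
    have hG : ContDiff ℝ (⊤ : ℕ∞) (fderiv ℝ f) := hf.fderiv_right (by simp)
    have hGlow : ∀ k < m, iteratedFDeriv ℝ k (fderiv ℝ f) 0 = 0 := fun k hk => by
      rw [← norm_eq_zero, norm_iteratedFDeriv_fderiv, hlow (k + 1) (by omega), norm_zero]
    rw [← norm_eq_zero, ← norm_iteratedFDeriv_fderiv, norm_eq_zero]
    refine ih hG hGlow fun x => ?_
    obtain ⟨C, hC0, hC⟩ := rescale_bound hf hlow
    obtain ⟨D, hD0, hD⟩ := rescale_bound hG hGlow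
    set B : E → E →L[ℝ] F :=
      fun y => ((m.factorial : ℝ)⁻¹) • iteratedFDeriv ℝ m (fderiv ℝ f) 0 (fun _ => y) with hB
    set R : ℝ := ‖x‖ + 1 with hR
    have hR0 : 0 < R := by positivity
    have ht : Tendsto (fun k : ℕ => (k : ℝ) + R) atTop atTop :=
      tendsto_atTop_add_const_right _ _ tendsto_natCast_atTop_atTop
    have hinv : Tendsto (fun k : ℕ => ((k : ℝ) + R)⁻¹) atTop (𝓝 0) :=
      tendsto_inv_atTop_zero.comp ht
    have hder := hasFDerivAt_of_tendstoUniformlyOn (𝕜 := ℝ) (l := (atTop : Filter ℕ))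
      (s := Metric.ball (0 : E) R)
      (f := fun k y => ((k : ℝ) + R) ^ (m + 1) • f (((k : ℝ) + R)⁻¹ • y))
      (f' := fun k y => ((k : ℝ) + R) ^ m • fderiv ℝ f (((k : ℝ) + R)⁻¹ • y))
      (g := fun _ => 0) (g' := B) (x := x) Metric.isOpen_ball ?_ ?_ ?_
      (by simp [hR])
    · have h2 : B x = 0 := hder.unique (hasFDerivAt_const _ _)
      rw [hB] at h2
      exact (smul_eq_zero.1 h2).resolve_left (by positivity)
    · rw [Metric.tendstoUniformlyOn_iff]
      intro ε hε
      have h0 : Tendsto (fun k : ℕ => D * R ^ (m + 1) * ((k : ℝ) + R)⁻¹) atTop (𝓝 0) := by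
        simpa using hinv.const_mul (D * R ^ (m + 1))
      filter_upwards [h0.eventually_lt_const hε] with k hk y hy
      have hy' : ‖y‖ < R := by simpa using hy
      have hk0 : (0 : ℝ) ≤ k := k.cast_nonneg
      rw [dist_comm, dist_eq_norm]
      refine (hD _ y (by positivity) (by linarith)).trans_lt (lt_of_le_of_lt ?_ hk)
      gcongr
    · intro k y _
      have hk0 : (0 : ℝ) < k + R := by positivity
      have h1 : HasFDerivAt (fun y : E => ((k : ℝ) + R)⁻¹ • y)
          (((k : ℝ) + R)⁻¹ • ContinuousLinearMap.id ℝ E) y :=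
        (hasFDerivAt_id y).const_smul _
      have h2 := ((hf.differentiable (by simp) (((k : ℝ) + R)⁻¹ • y)).hasFDerivAt.comp y h1).const_smul
        (((k : ℝ) + R) ^ (m + 1))
      refine h2.congr_fderiv ?_
      ext v
      simp only [smul_apply, ContinuousLinearMap.comp_apply,
        ContinuousLinearMap.id_apply, map_smul, smul_smul]
      congr 1
      field_simp
      ring
    · intro y hy
      have hy' : ‖y‖ < R := by simpa using hy
      have h0 : Tendsto (fun k : ℕ => C * ‖y‖ ^ (m + 1 + 1) * ((k : ℝ) + R)⁻¹) atTop (𝓝 0) := by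
        simpa using hinv.const_mul (C * ‖y‖ ^ (m + 1 + 1))
      refine squeeze_zero_norm (fun k => ?_) h0
      have hk0 : (0 : ℝ) ≤ k := k.cast_nonneg
      simpa [hdiag y] using hC ((k : ℝ) + R) y (by positivity) (by linarith)

theorem exists_firstHomogeneousPart_ne {F : Type} [NormedAddCommGroup F] [NormedSpace ℝ F]
    [CompleteSpace F] {f : E → F} (hf : ContDiff ℝ (⊤ : ℕ∞) f)
    (hord : {k : ℕ | iteratedFDeriv ℝ k f 0 ≠ 0}.Nonempty) :
    ∃ x, firstHomogeneousPart f x ≠ 0 := by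
  by_contra! h
  refine Nat.sInf_mem hord (iteratedFDeriv_eq_zero_of_diag _ hf (germOrder_low f) fun x => ?_)
  exact (smul_eq_zero.1 (h x)).resolve_left (by positivity)

/-- Blowing up a smooth germ at the rate of its order yields its first homogeneous part; the base
points `u k` may vary. -/
theorem tendsto_rescale {ι F : Type} [NormedAddCommGroup F] [NormedSpace ℝ F]
    [CompleteSpace F] {f : E → F} (hf : ContDiff ℝ (⊤ : ℕ∞) f) {L : Filter ι} {t : ι → ℝ}
    (ht : Tendsto t L atTop) {u : ι → E} {x : E} (hu : Tendsto u L (𝓝 x)) :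
    Tendsto (fun k => t k ^ germOrder f • f ((t k)⁻¹ • u k)) L (𝓝 (firstHomogeneousPart f x)) := by
  obtain ⟨C, -, hC⟩ := rescale_bound hf (germOrder_low f)
  have hcont : Continuous (firstHomogeneousPart f) := by
    unfold firstHomogeneousPart
    fun_prop
  have h1 : Tendsto (fun k => firstHomogeneousPart f (u k)) L (𝓝 (firstHomogeneousPart f x)) :=
    (hcont.tendsto x).comp hu
  have h2 : Tendsto (fun k => C * ‖u k‖ ^ (germOrder f + 1) * (t k)⁻¹) L (𝓝 0) := by
    simpa using ((hu.norm.pow (germOrder f + 1)).const_mul C).mul (tendsto_inv_atTop_zero.comp ht)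
  have h3 : Tendsto (fun k => t k ^ germOrder f • f ((t k)⁻¹ • u k)
      - firstHomogeneousPart f (u k)) L (𝓝 0) := by
    refine squeeze_zero_norm' ?_ h2
    filter_upwards [ht.eventually_ge_atTop (‖x‖ + 1), ht.eventually_gt_atTop 0,
      hu.norm.eventually_lt_const (lt_add_one ‖x‖)] with k hk hk0 hku
    exact hC (t k) (u k) hk0 (hku.le.trans hk)
  simpa using h3.add h1

/-- Rescaling by a power below the order kills the germ. -/
theorem tendsto_rescale_of_lt {ι F : Type} [NormedAddCommGroup F] [NormedSpace ℝ F]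
    [CompleteSpace F] {f : E → F} (hf : ContDiff ℝ (⊤ : ℕ∞) f) {L : Filter ι} {t : ι → ℝ}
    (ht : Tendsto t L atTop) {u : ι → E} {x : E} (hu : Tendsto u L (𝓝 x)) {a : ℕ}
    (ha : a < germOrder f) :
    Tendsto (fun k => t k ^ a • f ((t k)⁻¹ • u k)) L (𝓝 0) := by
  have h1 := ((tendsto_pow_atTop (α := ℝ) (n := germOrder f - a) (by omega)).comp ht).inv_tendsto_atTop
  have h2 := h1.smul (tendsto_rescale hf ht hu)
  rw [zero_smul] at h2
  refine h2.congr' ?_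
  filter_upwards [ht.eventually_gt_atTop 0] with k hk
  simp only [Pi.inv_apply, Function.comp_apply, smul_smul]
  congr 1
  rw [inv_mul_eq_div, div_eq_iff (by positivity), ← pow_add]
  congr 1
  omega

end Taylor

/-! ### Blow-ups of bi-Lipschitz germs -/

section BlowUp

variable {E : Type} [NormedAddCommGroup E] [NormedSpace ℝ E] [FiniteDimensional ℝ E]

/-- Compactness in the form used below: bounded families converge along ultrafilters, so that
pointwise ultralimits take the place of the subsequences of the Arzelà–Ascoli theorem. -/
theorem exists_ultralimit {ι : Type} (L : Ultrafilter ι) {u : ι → E} {R : ℝ}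
    (h : ∀ᶠ k in (L : Filter ι), ‖u k‖ ≤ R) : ∃ y, Tendsto u L (𝓝 y) := by
  have := FiniteDimensional.proper ℝ E
  obtain ⟨y, -, hy⟩ := (isCompact_closedBall (0 : E) R).ultrafilter_le_nhds (L.map u) (by
    rw [le_principal_iff]
    refine Ultrafilter.mem_map.2 (h.mono fun k hk => ?_)
    simpa using hk)
  exact ⟨y, hy⟩

/-- The blow-up `h'` of a bi-Lipschitz germ `h` along an ultrafilter: the pointwise ultralimit of
the rescaled maps `x ↦ t • h (x / t)`, `t → ∞`. It is a global bi-Lipschitz homeomorphism with the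
same constant. Surjectivity is obtained by taking the ultralimit of rescaled preimages. -/
theorem exists_blowUp {ι : Type} (L : Ultrafilter ι) {t : ι → ℝ}
    (ht : Tendsto t L atTop) {h : E → E} {U : Set E} (hh : IsBiLipGermHomeo h U) :
    ∃ h' : E → E, IsBiLipGermHomeo h' Set.univ ∧ Function.Surjective h' ∧
      ∀ (u : ι → E) (x : E), Tendsto u L (𝓝 x) →
        Tendsto (fun k => t k • h ((t k)⁻¹ • u k)) L (𝓝 (h' x)) := by
  obtain ⟨hUo, h0U, h00, himg, K, hK1, hK⟩ := hh
  have hK0 : 0 < K := by linarith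
  have hpos := ht.eventually_gt_atTop 0
  have hmem : ∀ (u : ι → E) (x : E) (S : Set E), S ∈ 𝓝 (0 : E) → Tendsto u L (𝓝 x) →
      ∀ᶠ k in (L : Filter ι), (t k)⁻¹ • u k ∈ S := by
    intro u x S hS hu
    have := (tendsto_inv_atTop_zero.comp ht).smul hu
    rw [zero_smul] at this
    exact this hS
  have hU : U ∈ 𝓝 (0 : E) := hUo.mem_nhds h0U
  -- The bi-Lipschitz estimate is invariant under rescaling.
  have hscale : ∀ s : ℝ, 0 < s → ∀ a b : E, s⁻¹ • a ∈ U → s⁻¹ • b ∈ U →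
      (1 / K) * ‖a - b‖ ≤ ‖s • h (s⁻¹ • a) - s • h (s⁻¹ • b)‖ ∧
        ‖s • h (s⁻¹ • a) - s • h (s⁻¹ • b)‖ ≤ K * ‖a - b‖ := by
    intro s hs a b ha hb
    have h1 := hK _ ha _ hb
    rw [← smul_sub, norm_smul, norm_inv, Real.norm_of_nonneg hs.le] at h1
    rw [← smul_sub, norm_smul, Real.norm_of_nonneg hs.le]
    constructor
    · calc _ = s * (1 / K * (s⁻¹ * ‖a - b‖)) := by field_simp
        _ ≤ _ := by gcongr; exact h1.1
    · calc _ ≤ s * (K * (s⁻¹ * ‖a - b‖)) := by gcongr; exact h1.2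
        _ = _ := by field_simp
  have hex : ∀ x : E, ∃ y, Tendsto (fun k => t k • h ((t k)⁻¹ • x)) L (𝓝 y) := by
    intro x
    refine exists_ultralimit L (R := K * ‖x‖) ?_
    filter_upwards [hpos, hmem _ x U hU tendsto_const_nhds] with k hk hkx
    simpa [h00] using (hscale _ hk x 0 hkx (by simpa using h0U)).2
  choose h' hh' using hex
  have hlim : ∀ (u : ι → E) (x : E), Tendsto u L (𝓝 x) →
      Tendsto (fun k => t k • h ((t k)⁻¹ • u k)) L (𝓝 (h' x)) := by
    intro u x hu
    have h1 : Tendsto (fun k => K * ‖u k - x‖) L (𝓝 0) := by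
      simpa using ((hu.sub_const x).norm).const_mul K
    have h2 : Tendsto (fun k => t k • h ((t k)⁻¹ • u k) - t k • h ((t k)⁻¹ • x)) L (𝓝 0) := by
      refine squeeze_zero_norm' ?_ h1
      filter_upwards [hpos, hmem _ x U hU tendsto_const_nhds, hmem _ x U hU hu] with k hk hkx hku
      exact (hscale _ hk _ _ hku hkx).2
    simpa using h2.add (hh' x)
  have hsurj : Function.Surjective h' := by
    intro y
    -- `t k • z k` is the preimage of `y` under the map rescaled by `t k`.
    have h1 : ∀ᶠ k in (L : Filter ι), ∃ z ∈ U, h z = (t k)⁻¹ • y :=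
      hmem _ y _ himg tendsto_const_nhds
    obtain ⟨z, hz⟩ := h1.choice
    obtain ⟨x, hx⟩ := exists_ultralimit L (u := fun k => t k • z k) (R := K * ‖y‖) (by
      filter_upwards [hpos, hz] with k hk hzk
      have := (hscale _ hk (t k • z k) 0 (by simpa [smul_smul, hk.ne'] using hzk.1)
        (by simpa using h0U)).1
      simp only [smul_smul, inv_mul_cancel₀ hk.ne', one_smul, hzk.2, smul_zero, h00, sub_zero,
        mul_inv_cancel₀ hk.ne'] at this
      rwa [one_div, inv_mul_le_iff₀ hK0] at this)
    refine ⟨x, tendsto_nhds_unique (hlim _ x hx) (tendsto_const_nhds.congr' ?_)⟩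
    filter_upwards [hpos, hz] with k hk hzk
    simp only [smul_smul, inv_mul_cancel₀ hk.ne', one_smul, hzk.2, mul_inv_cancel₀ hk.ne']
  refine ⟨h', ⟨isOpen_univ, Set.mem_univ _, ?_, ?_, K, hK1, fun x _ y _ => ?_⟩, hsurj, hlim⟩
  · exact tendsto_nhds_unique (hh' 0) (by simp [h00])
  · rw [Set.image_univ, hsurj.range_eq]
    exact univ_mem
  · have h1 := ((hh' x).sub (hh' y)).norm
    have h2 : ∀ᶠ k in (L : Filter ι),
        (1 / K) * ‖x - y‖ ≤ ‖t k • h ((t k)⁻¹ • x) - t k • h ((t k)⁻¹ • y)‖ ∧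
          ‖t k • h ((t k)⁻¹ • x) - t k • h ((t k)⁻¹ • y)‖ ≤ K * ‖x - y‖ := by
      filter_upwards [hpos, hmem _ x U hU tendsto_const_nhds, hmem _ y U hU tendsto_const_nhds]
        with k hk hkx hky using hscale _ hk _ _ hkx hky
    exact ⟨ge_of_tendsto h1 (h2.mono fun _ h => h.1), le_of_tendsto h1 (h2.mono fun _ h => h.2)⟩

end BlowUp

/-! ### Equivalence of the first homogeneous parts -/

/-- Theorem 3.1: if smooth map germs `f g : (ℝⁿ, 0) → (ℝᵖ, 0)` of finite
order are bi-Lipschitz left-right equivalent, then so are their first homogeneous parts. -/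
theorem rank_biLipschitz_stmt3 {n p : ℕ}
    (f g : EuclideanSpace ℝ (Fin n) → EuclideanSpace ℝ (Fin p))
    (hf : ContDiff ℝ (⊤ : ℕ∞) f) (hg : ContDiff ℝ (⊤ : ℕ∞) g)
    (hf0 : f 0 = 0) (hg0 : g 0 = 0)
    (hford : {k : ℕ | iteratedFDeriv ℝ k f 0 ≠ 0}.Nonempty)
    (hgord : {k : ℕ | iteratedFDeriv ℝ k g 0 ≠ 0}.Nonempty)
    (hA : BiLipAEquiv f g) :
    BiLipAEquiv (firstHomogeneousPart f) (firstHomogeneousPart g) := by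
  obtain ⟨φ, U, ψ, V, hφ, hψ, hcomm⟩ := hA
  set L : Ultrafilter ℕ := hyperfilter ℕ
  have ht : Tendsto (fun k : ℕ => (k : ℝ)) L atTop :=
    tendsto_natCast_atTop_atTop.mono_left Nat.hyperfilter_le_atTop
  have hpos := ht.eventually_gt_atTop 0
  obtain ⟨Φ, hΦ, hΦs, hΦlim⟩ := exists_blowUp L ht hφ
  have hsmall : ∀ x : EuclideanSpace ℝ (Fin n),
      Tendsto (fun k : ℕ => (k : ℝ)⁻¹ • x) L (𝓝 0) := fun x => by
    simpa using (tendsto_inv_atTop_zero.comp ht).smul_const x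
  -- The exponent `a` is free: the comparison of orders uses the smaller of the two orders.
  have hfφ : ∀ (a : ℕ) x, (fun k : ℕ => (k : ℝ) ^ a • f ((k : ℝ)⁻¹ • ((k : ℝ) • φ ((k : ℝ)⁻¹ • x))))
      =ᶠ[L] fun k : ℕ => (k : ℝ) ^ a • ψ (g ((k : ℝ)⁻¹ • x)) := fun a x => by
    filter_upwards [hpos, (hsmall x).eventually hcomm] with k hk hkx
    rw [inv_smul_smul₀ hk.ne', hkx]
  have hψbound : ∃ K : ℝ, 0 < K ∧ ∀ (a : ℕ) x, ∀ᶠ k : ℕ in (L : Filter ℕ),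
      ‖(k : ℝ) ^ a • ψ (g ((k : ℝ)⁻¹ • x))‖ ≤ K * ‖(k : ℝ) ^ a • g ((k : ℝ)⁻¹ • x)‖ ∧
      ‖(k : ℝ) ^ a • g ((k : ℝ)⁻¹ • x)‖ ≤ K * ‖(k : ℝ) ^ a • ψ (g ((k : ℝ)⁻¹ • x))‖ := by
    obtain ⟨hVo, h0V, hψ0, -, K, hK1, hK⟩ := hψ
    have hK0 : 0 < K := by linarith
    refine ⟨K, hK0, fun a x => ?_⟩
    have hgx : Tendsto (fun k : ℕ => g ((k : ℝ)⁻¹ • x)) L (𝓝 0) := by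
      simpa [hg0, Function.comp_def] using (hg.continuous.tendsto 0).comp (hsmall x)
    filter_upwards [hgx (hVo.mem_nhds h0V)] with k hk
    have h1 := hK _ hk 0 h0V
    rw [hψ0, sub_zero, sub_zero, one_div, inv_mul_le_iff₀ hK0] at h1
    rw [norm_smul, norm_smul, mul_left_comm K, mul_left_comm K]
    exact ⟨by gcongr; exact h1.2, by gcongr; exact h1.1⟩
  have hord : germOrder f = germOrder g := by
    obtain ⟨K, hK0, hK⟩ := hψbound
    refine le_antisymm ?_ ?_
    · by_contra! hlt
      obtain ⟨x, hx⟩ := exists_firstHomogeneousPart_ne hg hgord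
      have h1 := (tendsto_rescale_of_lt hf ht (hΦlim _ x tendsto_const_nhds) hlt).congr'
        (hfφ _ x)
      refine hx (tendsto_nhds_unique (tendsto_rescale hg ht tendsto_const_nhds)
        (squeeze_zero_norm' ((hK (germOrder g) x).mono fun _ h => h.2) ?_))
      simpa using h1.norm.const_mul K
    · by_contra! hlt
      obtain ⟨y, hy⟩ := exists_firstHomogeneousPart_ne hf hford
      obtain ⟨x, rfl⟩ := hΦs y
      have h1 := tendsto_rescale_of_lt hg ht (tendsto_const_nhds (x := x)) hlt
      refine hy (tendsto_nhds_unique ((tendsto_rescale hf ht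
        (hΦlim _ x tendsto_const_nhds)).congr' (hfφ _ x))
        (squeeze_zero_norm' ((hK (germOrder f) x).mono fun _ h => h.1) ?_))
      simpa using h1.norm.const_mul K
  have ht' : Tendsto (fun k : ℕ => (k : ℝ) ^ germOrder f) L atTop :=
    (tendsto_pow_atTop (germOrder_ne_zero hf0 hford)).comp ht
  -- The source is zoomed by `k`, so the target has to be zoomed by `k ^ ord f`.
  obtain ⟨Ψ, hΨ, -, hΨlim⟩ := exists_blowUp L ht' hψ
  refine ⟨Φ, Set.univ, Ψ, Set.univ, hΦ, hΨ, Eventually.of_forall fun x => ?_⟩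
  have h1 := (tendsto_rescale hf ht (hΦlim _ x tendsto_const_nhds)).congr' (hfφ _ x)
  have h2 := hΨlim _ _ (tendsto_rescale hg ht (tendsto_const_nhds (x := x)))
  refine tendsto_nhds_unique h1 (h2.congr' ?_)
  filter_upwards [hpos] with k hk
  rw [← hord, inv_smul_smul₀ (by positivity)]
end

section
/- Let f : ℝⁿ → ℝᵖ satisfy f(x) = H_f(x) + R(x) near 0, where H_f : ℝⁿ → ℝᵖ is a continuous map homogeneous of degree k (i.e., H_f(t·x) = tᵏ·H_f(x) for t > 0) and ‖R(x)‖ ≤ C·‖x‖^{k+1} for some constant C and all x near 0. Let φ : ℝⁿ → ℝⁿ be a Lipschitz map with φ(0) = 0, let (mᵢ) be a sequence of positive integers tending to infinity, and suppose the maps x ↦ mᵢ·φ(x/mᵢ) converge uniformly on compact sets to a map φ* : ℝⁿ → ℝⁿ. Then for every x, mᵢᵏ · f(φ(x/mᵢ)) → H_f(φ*(x)) as i → ∞. -/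
open Filter Topology

/-!
Put `yᵢ = φ (x / mᵢ)` and `uᵢ = mᵢ • yᵢ`, so that `uᵢ → φ* x` and `yᵢ = uᵢ / mᵢ → 0`. Homogeneity gives
`mᵢ ^ k • f yᵢ = Hf uᵢ + mᵢ ^ k • (f yᵢ - Hf yᵢ)`. The first term tends to `Hf (φ* x)` by continuity,
and the second is bounded in norm by `C * mᵢ ^ k * ‖yᵢ‖ ^ (k + 1) = C * (mᵢ⁻¹ * ‖uᵢ‖ ^ (k + 1))`,
which tends to `0` because `uᵢ` converges.
-/

/-- claim (i) in the proof of Theorem 3.1: if `f = H_f + R` near `0`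
with `H_f` continuous and homogeneous of degree `k` and `‖R x‖ ≤ C ‖x‖^(k+1)`, `φ` is
Lipschitz with `φ 0 = 0`, `(mᵢ)` is a sequence of positive integers tending to `∞`, and
`x ↦ mᵢ • φ (x / mᵢ)` converges uniformly on compact sets to `φ*`, then for every `x`,
`mᵢ^k • f (φ (x / mᵢ)) → H_f (φ* x)`. -/
theorem rank_biLipschitz_stmt6 {n p : ℕ} (k : ℕ)
    (f Hf : EuclideanSpace ℝ (Fin n) → EuclideanSpace ℝ (Fin p)) (C : ℝ)
    (hHfCont : Continuous Hf)
    (hHfHom : ∀ t : ℝ, 0 < t → ∀ x, Hf (t • x) = t ^ k • Hf x)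
    (hfR : ∀ᶠ x in 𝓝 (0 : EuclideanSpace ℝ (Fin n)), ‖f x - Hf x‖ ≤ C * ‖x‖ ^ (k + 1))
    (φ : EuclideanSpace ℝ (Fin n) → EuclideanSpace ℝ (Fin n))
    (L : NNReal) (hφ : LipschitzWith L φ) (hφ0 : φ 0 = 0)
    (m : ℕ → ℕ) (hmpos : ∀ i, 0 < m i)
    (hmtop : Tendsto (fun i => (m i : ℝ)) atTop atTop)
    (φstar : EuclideanSpace ℝ (Fin n) → EuclideanSpace ℝ (Fin n))
    (hconv : ∀ K : Set (EuclideanSpace ℝ (Fin n)), IsCompact K →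
      TendstoUniformlyOn (fun i x => (m i : ℝ) • φ (((m i : ℝ))⁻¹ • x)) φstar atTop K) :
    ∀ x, Tendsto (fun i => ((m i : ℝ) ^ k) • f (φ (((m i : ℝ))⁻¹ • x))) atTop
      (𝓝 (Hf (φstar x))) := by
  intro x
  have hpos : ∀ i, (0 : ℝ) < m i := fun i => Nat.cast_pos.mpr (hmpos i)
  have hu : Tendsto (fun i => (m i : ℝ) • φ ((m i : ℝ)⁻¹ • x)) atTop (𝓝 (φstar x)) :=
    (hconv {x} isCompact_singleton).tendsto_at (Set.mem_singleton x)
  have hinv : Tendsto (fun i => (m i : ℝ)⁻¹) atTop (𝓝 0) := tendsto_inv_atTop_zero.comp hmtop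
  have hy : Tendsto (fun i => φ ((m i : ℝ)⁻¹ • x)) atTop (𝓝 0) := by
    have h := hinv.smul hu
    rw [zero_smul] at h
    exact h.congr fun i => inv_smul_smul₀ (hpos i).ne' _
  have hbound : Tendsto
      (fun i => C * ((m i : ℝ)⁻¹ * ‖(m i : ℝ) • φ ((m i : ℝ)⁻¹ • x)‖ ^ (k + 1))) atTop (𝓝 0) := by
    simpa using (hinv.mul (hu.norm.pow (k + 1))).const_mul C
  have hR : Tendsto (fun i => (m i : ℝ) ^ k •
      (f (φ ((m i : ℝ)⁻¹ • x)) - Hf (φ ((m i : ℝ)⁻¹ • x)))) atTop (𝓝 0) := by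
    refine squeeze_zero_norm' ?_ hbound
    filter_upwards [hy.eventually hfR] with i hi
    have hm := hpos i
    rw [norm_smul, norm_smul, norm_pow, Real.norm_of_nonneg hm.le]
    refine (mul_le_mul_of_nonneg_left hi (pow_nonneg hm.le k)).trans_eq ?_
    rw [mul_pow, pow_succ (m i : ℝ) k]
    field_simp
  have hsum := ((hHfCont.tendsto (φstar x)).comp hu).add hR
  rw [add_zero] at hsum
  refine hsum.congr fun i => ?_
  rw [Function.comp_apply, hHfHom _ (hpos i), ← smul_add, add_sub_cancel]
end

section
/- Let g : ℝⁿ → ℝᵖ satisfy g(x) = H_g(x) + R(x) near 0, where H_g : ℝⁿ → ℝᵖ is homogeneous of degree k and ‖R(x)‖ ≤ C·‖x‖^{k+1} for some constant C and all x near 0. Let ψ : ℝᵖ → ℝᵖ be a Lipschitz map with ψ(0) = 0, let (mᵢ) be a sequence of positive integers tending to infinity, and suppose the maps y ↦ mᵢᵏ·ψ(y/mᵢᵏ) converge uniformly on compact sets to a map ψ* : ℝᵖ → ℝᵖ. Then for every x, mᵢᵏ · ψ(g(x/mᵢ)) → ψ*(H_g(x)) as i → ∞. -/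
/-!
By homogeneity, `m⁻ᵏ • Hg x = Hg (x / m)`, so convergence of the rescaled maps at the single point
`Hg x` says that `mᵏ • ψ (Hg (x / m)) → ψ* (Hg x)`. Replacing `Hg` by `g` costs at most
`mᵏ * L * C * ‖x / m‖ ^ (k + 1) = L * C * ‖x‖ ^ (k + 1) / m`, which tends to `0`.
-/

open Filter Topology

/-- claim (ii) in the proof of Theorem 3.1: if `g = H_g + R` near `0`
with `H_g` homogeneous of degree `k` and `‖R x‖ ≤ C ‖x‖^(k+1)`, `ψ` is Lipschitz with
`ψ 0 = 0`, `(mᵢ)` is a sequence of positive integers tending to `∞`, and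
`y ↦ mᵢ^k • ψ (y / mᵢ^k)` converges uniformly on compact sets to `ψ*`, then for every `x`,
`mᵢ^k • ψ (g (x / mᵢ)) → ψ* (H_g x)`. -/
theorem rank_biLipschitz_stmt7 {n p : ℕ} (k : ℕ)
    (g Hg : EuclideanSpace ℝ (Fin n) → EuclideanSpace ℝ (Fin p)) (C : ℝ)
    (hHgHom : ∀ t : ℝ, 0 < t → ∀ x, Hg (t • x) = t ^ k • Hg x)
    (hgR : ∀ᶠ x in 𝓝 (0 : EuclideanSpace ℝ (Fin n)), ‖g x - Hg x‖ ≤ C * ‖x‖ ^ (k + 1))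
    (ψ : EuclideanSpace ℝ (Fin p) → EuclideanSpace ℝ (Fin p))
    (L : NNReal) (hψ : LipschitzWith L ψ) (hψ0 : ψ 0 = 0)
    (m : ℕ → ℕ) (hmpos : ∀ i, 0 < m i)
    (hmtop : Tendsto (fun i => (m i : ℝ)) atTop atTop)
    (ψstar : EuclideanSpace ℝ (Fin p) → EuclideanSpace ℝ (Fin p))
    (hconv : ∀ K : Set (EuclideanSpace ℝ (Fin p)), IsCompact K →
      TendstoUniformlyOn (fun i y => ((m i : ℝ) ^ k) • ψ ((((m i : ℝ) ^ k))⁻¹ • y))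
        ψstar atTop K) :
    ∀ x, Tendsto (fun i => ((m i : ℝ) ^ k) • ψ (g (((m i : ℝ))⁻¹ • x))) atTop
      (𝓝 (ψstar (Hg x))) := by
  intro x
  have h1 := (hconv {Hg x} isCompact_singleton).tendsto_at (Set.mem_singleton _)
  have hinv : Tendsto (fun i => ((m i : ℝ))⁻¹) atTop (𝓝 0) := tendsto_inv_atTop_zero.comp hmtop
  have hx : Tendsto (fun i => ((m i : ℝ))⁻¹ • x) atTop (𝓝 0) := by
    simpa using hinv.smul_const x
  have hlim : Tendsto (fun i => (L * (C * ‖x‖ ^ (k + 1))) * ((m i : ℝ))⁻¹) atTop (𝓝 0) := by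
    simpa using hinv.const_mul (L * (C * ‖x‖ ^ (k + 1)))
  have hdiff : Tendsto (fun i => ((m i : ℝ) ^ k) • ψ (g (((m i : ℝ))⁻¹ • x))
      - ((m i : ℝ) ^ k) • ψ ((((m i : ℝ) ^ k))⁻¹ • Hg x)) atTop (𝓝 0) := by
    refine squeeze_zero_norm' ?_ hlim
    filter_upwards [hx.eventually hgR] with i hi
    have hm : (0 : ℝ) < m i := by exact_mod_cast hmpos i
    have hH : (((m i : ℝ) ^ k))⁻¹ • Hg x = Hg (((m i : ℝ))⁻¹ • x) := by
      rw [hHgHom _ (inv_pos.mpr hm), inv_pow]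
    rw [hH, ← smul_sub, norm_smul, Real.norm_of_nonneg (by positivity)]
    calc (m i : ℝ) ^ k * ‖ψ (g ((m i : ℝ)⁻¹ • x)) - ψ (Hg ((m i : ℝ)⁻¹ • x))‖
        ≤ (m i : ℝ) ^ k * (L * (C * ‖(m i : ℝ)⁻¹ • x‖ ^ (k + 1))) := by
          gcongr
          exact (hψ.norm_sub_le _ _).trans (by gcongr)
      _ = (L * (C * ‖x‖ ^ (k + 1))) * ((m i : ℝ))⁻¹ := by
          rw [norm_smul, Real.norm_of_nonneg (by positivity), mul_pow, inv_pow, pow_succ (m i : ℝ)]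
          field_simp
  simpa using hdiff.add h1
end

section
/- Let φ : ℝⁿ → ℝⁿ be a bi-Lipschitz homeomorphism with φ(0) = 0 and inverse ψ. For each positive integer m define φₘ(x) = m·φ(x/m) and ψₘ(x) = m·ψ(x/m). Then: (a) each φₘ is a bi-Lipschitz homeomorphism with the same Lipschitz constants as φ (and likewise for ψₘ and ψ); (b) there exists a strictly increasing sequence of positive integers (mᵢ) such that φ_{mᵢ} and ψ_{mᵢ} converge uniformly on compact sets to bi-Lipschitz maps φ* and ψ* respectively; and (c) ψ* is the inverse of φ*. -/
open Filter Topology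

/-!
Rescaling by `m` preserves Lipschitz constants, the value `0` at the origin, and the relation of
being mutually inverse. The `K`-Lipschitz maps fixing the origin form a compact set for the
topology of uniform convergence on compact sets (`isCompact_lipschitz_fixing_zero`): this is
Arzelà–Ascoli, the family being equicontinuous and its values at `x` lying in the closed ball of
radius `K * ‖x‖`. On a `σ`-compact, locally compact space this topology is first countable, so
the sequence of pairs `(φₘ, ψₘ)` has a convergent subsequence, with limits in the same compact sets.
Composition is jointly continuous on a locally compact space, so the identities `ψₘ ∘ φₘ = id` and
`φₘ ∘ ψₘ = id` pass to the limit.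
-/

/-- Arzelà–Ascoli for `K`-Lipschitz maps fixing the origin, in the compact-open topology. -/
lemma isCompact_lipschitz_fixing_zero {E : Type*} [NormedAddCommGroup E] [ProperSpace E]
    (K : NNReal) : IsCompact {f : C(E, E) | LipschitzWith K f ∧ f 0 = 0} := by
  refine ArzelaAscoli.isCompact_of_equicontinuous _ ?_
    (LipschitzWith.uniformEquicontinuous _ K fun f => f.2.1).equicontinuous
  have himage : ContinuousMap.toFun '' {f : C(E, E) | LipschitzWith K f ∧ f 0 = 0} =
      {f : E → E | LipschitzWith K f} ∩ {f | f 0 = 0} := by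
    ext f
    constructor
    · rintro ⟨g, hg, rfl⟩
      exact hg
    · intro hf
      exact ⟨⟨f, hf.1.continuous⟩, hf, rfl⟩
  rw [himage]
  -- In the product topology the family is a closed subset of a product of closed balls.
  refine (isCompact_univ_pi fun x : E =>
    isCompact_closedBall (0 : E) (K * ‖x‖)).of_isClosed_subset ?_ ?_
  · exact (isClosed_setOfPred_lipschitzWith K).inter
      (isClosed_eq (continuous_apply 0) continuous_const)
  · rintro f ⟨hf, hf0⟩ x -
    have h := hf.dist_le_mul x 0
    rw [show f 0 = 0 from hf0, dist_zero_right x] at h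
    exact Metric.mem_closedBall.mpr h

lemma lipschitzWith_rescale {E : Type*} [NormedAddCommGroup E] [NormedSpace ℝ E] {f : E → E}
    {K : NNReal} (hf : LipschitzWith K f) {m : ℕ} (hm : 0 < m) :
    LipschitzWith K (fun x => (m : ℝ) • f ((m : ℝ)⁻¹ • x)) := by
  have hm' : (0 : ℝ) < m := by exact_mod_cast hm
  refine LipschitzWith.of_dist_le_mul fun x y => ?_
  have h := hf.dist_le_mul ((m : ℝ)⁻¹ • x) ((m : ℝ)⁻¹ • y)
  rw [dist_smul₀, Real.norm_of_nonneg (inv_nonneg.mpr hm'.le)] at h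
  rw [dist_smul₀, Real.norm_of_nonneg hm'.le]
  calc (m : ℝ) * dist (f ((m : ℝ)⁻¹ • x)) (f ((m : ℝ)⁻¹ • y))
      ≤ m * (K * ((m : ℝ)⁻¹ * dist x y)) := by gcongr
    _ = K * dist x y := by field_simp

lemma rescale_leftInverse {E : Type*} [AddCommGroup E] [Module ℝ E] {f g : E → E}
    (h : ∀ x, g (f x) = x) {m : ℕ} (hm : 0 < m) (x : E) :
    (m : ℝ) • g ((m : ℝ)⁻¹ • ((m : ℝ) • f ((m : ℝ)⁻¹ • x))) = x := by
  have hm' : (m : ℝ) ≠ 0 := by exact_mod_cast hm.ne'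
  rw [inv_smul_smul₀ hm', h, smul_inv_smul₀ hm']

/-- pseudo-tangent maps, after Sampaio: let `φ : ℝⁿ → ℝⁿ` be a
bi-Lipschitz homeomorphism with `φ 0 = 0` and inverse `ψ`, and for `m ≥ 1` set
`φₘ x = m • φ (x / m)`, `ψₘ x = m • ψ (x / m)`. Then (a) each `φₘ` is a bi-Lipschitz
homeomorphism with the same Lipschitz constants as `φ` and inverse `ψₘ`; (b) there is a
strictly increasing sequence `(mᵢ)` of positive integers such that `φ_{mᵢ}` and `ψ_{mᵢ}`
converge uniformly on compact sets to Lipschitz maps `φ*` and `ψ*` (with the same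
constants); and (c) `ψ*` is the inverse of `φ*`. -/
theorem rank_biLipschitz_stmt8 {n : ℕ}
    (φ ψ : EuclideanSpace ℝ (Fin n) → EuclideanSpace ℝ (Fin n))
    (K L : NNReal) (hφ : LipschitzWith K φ) (hψ : LipschitzWith L ψ)
    (hinv₁ : ∀ x, ψ (φ x) = x) (hinv₂ : ∀ x, φ (ψ x) = x)
    (hφ0 : φ 0 = 0) :
    -- (a)
    (∀ m : ℕ, 0 < m →
      LipschitzWith K (fun x => (m : ℝ) • φ (((m : ℝ))⁻¹ • x)) ∧
      LipschitzWith L (fun x => (m : ℝ) • ψ (((m : ℝ))⁻¹ • x)) ∧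
      (∀ x, (m : ℝ) • ψ (((m : ℝ))⁻¹ • ((m : ℝ) • φ (((m : ℝ))⁻¹ • x))) = x) ∧
      (∀ x, (m : ℝ) • φ (((m : ℝ))⁻¹ • ((m : ℝ) • ψ (((m : ℝ))⁻¹ • x))) = x)) ∧
    -- (b) and (c)
    ∃ (ms : ℕ → ℕ) (φstar ψstar :
        EuclideanSpace ℝ (Fin n) → EuclideanSpace ℝ (Fin n)),
      StrictMono ms ∧ (∀ i, 0 < ms i) ∧
      (∀ S : Set (EuclideanSpace ℝ (Fin n)), IsCompact S →
        TendstoUniformlyOn (fun i x => (ms i : ℝ) • φ (((ms i : ℝ))⁻¹ • x)) φstar atTop S ∧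
        TendstoUniformlyOn (fun i x => (ms i : ℝ) • ψ (((ms i : ℝ))⁻¹ • x)) ψstar atTop S) ∧
      LipschitzWith K φstar ∧ LipschitzWith L ψstar ∧
      (∀ x, ψstar (φstar x) = x) ∧ (∀ x, φstar (ψstar x) = x) := by
  have hψ0 : ψ 0 = 0 := by simpa [hφ0] using hinv₁ 0
  refine ⟨fun m hm => ⟨lipschitzWith_rescale hφ hm, lipschitzWith_rescale hψ hm,
    rescale_leftInverse hinv₁ hm, rescale_leftInverse hinv₂ hm⟩, ?_⟩
  -- Index by `i + 1`, so that every scale is positive.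
  let F : ℕ → C(EuclideanSpace ℝ (Fin n), EuclideanSpace ℝ (Fin n)) := fun i =>
    ⟨_, (lipschitzWith_rescale hφ i.succ_pos).continuous⟩
  let G : ℕ → C(EuclideanSpace ℝ (Fin n), EuclideanSpace ℝ (Fin n)) := fun i =>
    ⟨_, (lipschitzWith_rescale hψ i.succ_pos).continuous⟩
  obtain ⟨⟨f, g⟩, ⟨hf, hg⟩, s, hs, hlim⟩ :=
    ((isCompact_lipschitz_fixing_zero (E := EuclideanSpace ℝ (Fin n)) K).prod
      (isCompact_lipschitz_fixing_zero L)).tendsto_subseq (x := fun i => (F i, G i)) fun i =>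
      ⟨⟨lipschitzWith_rescale hφ i.succ_pos, by simp [F, hφ0]⟩,
        ⟨lipschitzWith_rescale hψ i.succ_pos, by simp [G, hψ0]⟩⟩
  have hF : Tendsto (fun i => F (s i)) atTop (𝓝 f) := (continuous_fst.tendsto _).comp hlim
  have hG : Tendsto (fun i => G (s i)) atTop (𝓝 g) := (continuous_snd.tendsto _).comp hlim
  have hGF : g.comp f = ContinuousMap.id _ := by
    refine tendsto_nhds_unique (hG.compCM hF) ?_
    have : ∀ i, (G (s i)).comp (F (s i)) = ContinuousMap.id _ := fun i =>
      ContinuousMap.ext (rescale_leftInverse hinv₁ (s i).succ_pos)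
    simp only [this, tendsto_const_nhds]
  have hFG : f.comp g = ContinuousMap.id _ := by
    refine tendsto_nhds_unique (hF.compCM hG) ?_
    have : ∀ i, (F (s i)).comp (G (s i)) = ContinuousMap.id _ := fun i =>
      ContinuousMap.ext (rescale_leftInverse hinv₂ (s i).succ_pos)
    simp only [this, tendsto_const_nhds]
  refine ⟨fun i => s i + 1, f, g, fun i j hij => Nat.succ_lt_succ (hs hij),
    fun i => Nat.succ_pos _, fun S hS => ⟨?_, ?_⟩, hf.1, hg.1,
    fun x => DFunLike.congr_fun hGF x, fun x => DFunLike.congr_fun hFG x⟩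
  · exact ContinuousMap.tendsto_iff_forall_isCompact_tendstoUniformlyOn.mp hF S hS
  · exact ContinuousMap.tendsto_iff_forall_isCompact_tendstoUniformlyOn.mp hG S hS
end
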